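/- Let n ≥ 1 and r ≥ 1 be integers and let x, y ∈ [0,∞)^n. Suppose F_{k,r}(x) ≤ F_{k,r}(y) for every integer k with r ≤ k ≤ n·r, and suppose ∑_{i=1}^n x_i = ∑_{i=1}^n y_i. Then for every real p with 1 ≤ p ≤ r+1 one has ∑_{i=1}^n x_i^p ≥ ∑_{i=1}^n y_i^p. -/

import Mathlib

open Finset MeasureTheory

/-- `F n r k x`: the sum over all n-tuples κ of nonnegative integers with `∑ i, κ i = k`
and `max_i κ i ≤ r` of `∏ i, x i ^ κ i / (κ i)!`. -/
noncomputable def F (n r k : ℕ) (x : Fin n → ℝ) : ℝ :=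
  ∑ κ ∈ Finset.univ.filter (fun κ : Fin n → Fin (r + 1) => ∑ i, (κ i : ℕ) = k),
    ∏ i, x i ^ (κ i : ℕ) / (Nat.factorial (κ i : ℕ))

noncomputable def PP (r : ℕ) (t : ℝ) : ℝ := ∑ j ∈ Finset.range (r+1), t ^ j / (Nat.factorial j : ℝ)

noncomputable def gg (r : ℕ) (t : ℝ) : ℝ := t - Real.log (PP r t)

lemma PP_one_le (r : ℕ) (t : ℝ) (ht : 0 ≤ t) : 1 ≤ PP r t := by
  unfold PP
  rw [Finset.sum_range_succ']
  have : 0 ≤ ∑ k ∈ Finset.range r, t ^ (k+1) / (Nat.factorial (k+1) : ℝ) :=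
    Finset.sum_nonneg (fun i _ => by positivity)
  simp at this ⊢
  linarith

lemma PP_lt_exp (r : ℕ) (t : ℝ) (ht : 0 < t) : PP r t < Real.exp t := by
  have h := Real.sum_le_exp_of_nonneg ht.le (r+2)
  rw [Finset.sum_range_succ] at h
  have : 0 < t ^ (r+1) / (Nat.factorial (r+1) : ℝ) := by positivity
  unfold PP
  linarith

lemma gg_pos (r : ℕ) (t : ℝ) (ht : 0 < t) : 0 < gg r t := by
  have h1 := PP_one_le r t ht.le
  have := Real.log_lt_log (by linarith) (PP_lt_exp r t ht)
  rw [Real.log_exp] at this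
  unfold gg; linarith

lemma gg_zero (r : ℕ) : gg r 0 = 0 := by
  have : PP r 0 = 1 := by
    unfold PP
    rw [Finset.sum_range_succ']; simp
  simp [gg, this]

lemma gg_le (r : ℕ) (t : ℝ) (ht : 0 ≤ t) : gg r t ≤ t := by
  have := Real.log_nonneg (PP_one_le r t ht)
  unfold gg; linarith

lemma gg_le_pow (r : ℕ) : ∃ C : ℝ, ∀ t, 0 ≤ t → t ≤ 1 → gg r t ≤ C * t ^ (r+1) := by
  refine ⟨((r+1 : ℕ) + 1) / ((Nat.factorial (r+1) : ℝ) * (r+1 : ℕ)), fun t ht ht1 => ?_⟩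
  have h := Real.exp_bound' ht ht1 (n := r+1) (by omega)
  have h1 := PP_one_le r t ht
  have h2 : gg r t ≤ Real.exp t / PP r t - 1 := by
    have := Real.log_le_sub_one_of_pos (x := Real.exp t / PP r t) (by positivity)
    rw [Real.log_div (by positivity) (by positivity), Real.log_exp] at this
    exact this
  have h3 : PP r t ≤ Real.exp t := Real.sum_le_exp_of_nonneg ht (r+1)
  have h4 : Real.exp t / PP r t - 1 ≤ Real.exp t - PP r t := by
    have : Real.exp t / PP r t - 1 = (Real.exp t - PP r t) / PP r t := by field_simp
    rw [this]
    exact div_le_self (by linarith) h1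
  have h5 : Real.exp t - PP r t ≤ t ^ (r+1) * ((r+1 : ℕ) + 1) / ((Nat.factorial (r+1) : ℝ) * (r+1 : ℕ)) := by
    unfold PP; linarith
  calc _ ≤ _ := h2.trans (h4.trans h5)
    _ = _ := by ring

lemma gg_cont (r : ℕ) : ContinuousOn (gg r) (Set.Ioi 0) := by
  unfold gg
  refine continuousOn_id.sub (ContinuousOn.log ?_ ?_)
  · unfold PP; fun_prop
  · intro t ht
    have := PP_one_le r t (le_of_lt ht)
    positivity

noncomputable def GG (r : ℕ) (p : ℝ) (t : ℝ) : ℝ := gg r t * t ^ (-p-1)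

lemma GG_int (r : ℕ) (p : ℝ) (hp : 1 < p) (hp' : p < r + 1) :
    IntegrableOn (GG r p) (Set.Ioi 0) := by
  have hc : ContinuousOn (GG r p) (Set.Ioi 0) := by
    unfold GG
    refine (gg_cont r).mul (fun t ht => ?_)
    exact (Real.continuousAt_rpow_const _ _ (Or.inl (ne_of_gt ht))).continuousWithinAt
  rw [← Set.Ioc_union_Ioi_eq_Ioi (zero_le_one' ℝ)]
  refine IntegrableOn.union ?_ ?_
  · obtain ⟨C, hC⟩ := gg_le_pow r
    have hi : IntegrableOn (fun t : ℝ => C * t ^ ((r:ℝ) - p)) (Set.Ioc 0 1) := by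
      refine Integrable.const_mul ?_ C
      have := intervalIntegral.intervalIntegrable_rpow' (a := 0) (b := 1) (r := (r:ℝ) - p) (by linarith)
      rwa [intervalIntegrable_iff_integrableOn_Ioc_of_le zero_le_one] at this
    refine Integrable.mono' hi ((hc.mono Set.Ioc_subset_Ioi_self).aestronglyMeasurable measurableSet_Ioc) ?_
    filter_upwards [ae_restrict_mem measurableSet_Ioc] with t ht
    have h0 := gg_pos r t ht.1
    have h1 : 0 < t ^ (-p-1) := Real.rpow_pos_of_pos ht.1 _
    rw [Real.norm_of_nonneg (by unfold GG; positivity)]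
    calc GG r p t ≤ C * t ^ (r+1) * t ^ (-p-1) :=
          mul_le_mul_of_nonneg_right (hC t ht.1.le ht.2) h1.le
      _ = C * t ^ ((r:ℝ) - p) := by
          rw [← Real.rpow_natCast, mul_assoc, ← Real.rpow_add ht.1]
          push_cast; ring_nf
  · have hi : IntegrableOn (fun t : ℝ => t ^ (-p)) (Set.Ioi 1) :=
      integrableOn_Ioi_rpow_of_lt (by linarith) one_pos
    refine Integrable.mono' hi ((hc.mono (Set.Ioi_subset_Ioi zero_le_one)).aestronglyMeasurable measurableSet_Ioi) ?_
    filter_upwards [ae_restrict_mem measurableSet_Ioi] with t ht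
    have ht0 : 0 < t := lt_trans one_pos ht
    have h0 := gg_pos r t ht0
    have h1 : 0 < t ^ (-p-1) := Real.rpow_pos_of_pos ht0 _
    rw [Real.norm_of_nonneg (by unfold GG; positivity)]
    calc GG r p t ≤ t * t ^ (-p-1) :=
          mul_le_mul_of_nonneg_right (gg_le r t ht0.le) h1.le
      _ = t ^ (-p) := by
          rw [Real.rpow_sub_one ht0.ne']; field_simp

lemma GG_pos (r : ℕ) (p : ℝ) (hp : 1 < p) (hp' : p < r + 1) :
    0 < ∫ t in Set.Ioi 0, GG r p t := by
  have hpos : ∀ t ∈ Set.Ioi (0:ℝ), 0 < GG r p t := fun t ht =>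
    mul_pos (gg_pos r t ht) (Real.rpow_pos_of_pos ht _)
  rw [setIntegral_pos_iff_support_of_nonneg_ae]
  · have : Function.support (GG r p) ∩ Set.Ioi 0 = Set.Ioi 0 :=
      Set.inter_eq_right.mpr (fun t ht => (hpos t ht).ne')
    rw [this]; simp
  · filter_upwards [ae_restrict_mem measurableSet_Ioi] with t ht using (hpos t ht).le
  · exact GG_int r p hp hp'

lemma scale (r : ℕ) (p : ℝ) (hp : 1 < p) (hp' : p < r + 1) (a : ℝ) (ha : 0 ≤ a) :
    IntegrableOn (fun t => gg r (a * t) * t ^ (-p-1)) (Set.Ioi 0) ∧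
    ∫ t in Set.Ioi 0, gg r (a * t) * t ^ (-p-1) = a ^ p * ∫ t in Set.Ioi 0, GG r p t := by
  rcases ha.eq_or_lt with rfl | ha
  · simp [gg_zero, Real.zero_rpow (by linarith : p ≠ 0)]
  · have he : Set.EqOn (fun t => gg r (a * t) * t ^ (-p-1)) (fun t => a ^ (p+1) * GG r p (a * t)) (Set.Ioi 0) := by
      intro t ht
      have ht : 0 < t := ht
      simp only [GG]
      rw [Real.mul_rpow ha.le ht.le]
      have : a ^ (p+1) * a ^ (-p-1) = 1 := by
        rw [← Real.rpow_add ha]; ring_nf; simp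
      linear_combination (- gg r (a*t) * t ^ (-p-1)) * this
    constructor
    · rw [integrableOn_congr_fun he measurableSet_Ioi]
      refine Integrable.const_mul ?_ _
      have := (integrableOn_Ioi_comp_mul_left_iff (GG r p) 0 ha).2 (by simpa using GG_int r p hp hp')
      exact this
    · rw [setIntegral_congr_fun measurableSet_Ioi he, integral_const_mul,
        integral_comp_mul_left_Ioi _ _ ha, Real.rpow_add_one ha.ne']
      simp; field_simp

lemma gen (n r : ℕ) (x : Fin n → ℝ) (t : ℝ) :
    ∏ i, PP r (x i * t) = ∑ k ∈ Finset.range (n * r + 1), F n r k x * t ^ k := by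
  unfold PP F
  simp_rw [← Fin.sum_univ_eq_sum_range (fun j => (_ * t) ^ j / (Nat.factorial j : ℝ)) (r+1)]
  rw [Fintype.prod_sum]
  rw [← Finset.sum_fiberwise_of_maps_to (t := Finset.range (n*r+1))
    (g := fun κ : Fin n → Fin (r+1) => ∑ i, (κ i : ℕ))]
  · refine Finset.sum_congr rfl fun k _ => ?_
    rw [Finset.sum_mul]
    refine Finset.sum_congr rfl fun κ hκ => ?_
    have hκ := (Finset.mem_filter.1 hκ).2
    rw [← hκ, ← Finset.prod_pow_eq_pow_sum, ← Finset.prod_mul_distrib]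
    refine Finset.prod_congr rfl fun i _ => ?_
    rw [mul_pow]; ring
  · intro κ _
    rw [Finset.mem_range, Nat.lt_succ_iff]
    calc ∑ i, (κ i : ℕ) ≤ ∑ i : Fin n, r := Finset.sum_le_sum fun i _ => by have := (κ i).2; omega
      _ = n * r := by simp

lemma F_low (n r k : ℕ) (hk : k ≤ r) (x : Fin n → ℝ) :
    F n r k x = (∑ i, x i) ^ k / (Nat.factorial k : ℝ) := by
  rw [Finset.sum_pow_eq_sum_piAntidiag, Finset.sum_div]
  unfold F
  refine Finset.sum_bij (fun κ _ => fun i => (κ i : ℕ)) ?_ ?_ ?_ ?_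
  · intro κ hκ
    simpa using hκ
  · intro a _ b _ h
    funext i
    exact Fin.ext (congrFun h i)
  · intro f hf
    have hf : ∑ i, f i = k := by simpa using hf
    have hle : ∀ i, f i < r + 1 := fun i => by
      have := Finset.single_le_sum (f := f) (fun _ _ => Nat.zero_le _) (Finset.mem_univ i)
      omega
    exact ⟨fun i => ⟨f i, hle i⟩, by simpa using hf, rfl⟩
  · intro κ hκ
    have hκ : ∑ i, (κ i : ℕ) = k := by simpa using hκ
    have h := Nat.multinomial_spec (Finset.univ) (fun i => (κ i : ℕ))
    rw [hκ] at h
    have h' : (∏ i, (Nat.factorial (κ i : ℕ) : ℝ)) * (Nat.multinomial Finset.univ (fun i => (κ i : ℕ)) : ℝ) = (Nat.factorial k : ℝ) := by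
      exact_mod_cast h
    have hne : (∏ i, (Nat.factorial (κ i : ℕ) : ℝ)) ≠ 0 := Finset.prod_ne_zero_iff.2 fun i _ => by positivity
    rw [Finset.prod_div_distrib, div_eq_div_iff hne (by positivity), ← h']
    ring

theorem stmt2 (n r : ℕ) (hn : 1 ≤ n) (hr : 1 ≤ r) (x y : Fin n → ℝ)
    (hx : ∀ i, 0 ≤ x i) (hy : ∀ i, 0 ≤ y i)
    (hF : ∀ k : ℕ, r ≤ k → k ≤ n * r → F n r k x ≤ F n r k y)
    (hsum : ∑ i, x i = ∑ i, y i) :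
    ∀ p : ℝ, 1 ≤ p → p ≤ r + 1 → ∑ i, y i ^ p ≤ ∑ i, x i ^ p := by
  have hF' : ∀ k ∈ Finset.range (n * r + 1), F n r k x ≤ F n r k y := by
    intro k hk
    rcases le_total r k with h | h
    · exact hF k h (Nat.lt_succ_iff.1 (Finset.mem_range.1 hk))
    · rw [F_low n r k h, F_low n r k h, hsum]
  have hg : ∀ t : ℝ, 0 < t → ∑ i, gg r (y i * t) ≤ ∑ i, gg r (x i * t) := by
    intro t ht
    have h1 : ∏ i, PP r (x i * t) ≤ ∏ i, PP r (y i * t) := by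
      rw [gen, gen]
      exact Finset.sum_le_sum fun k hk => mul_le_mul_of_nonneg_right (hF' k hk) (by positivity)
    have hxp : ∀ i, 0 < PP r (x i * t) := fun i =>
      lt_of_lt_of_le one_pos (PP_one_le r _ (mul_nonneg (hx i) ht.le))
    have hyp : ∀ i, 0 < PP r (y i * t) := fun i =>
      lt_of_lt_of_le one_pos (PP_one_le r _ (mul_nonneg (hy i) ht.le))
    have h2 := Real.log_le_log (Finset.prod_pos fun i _ => hxp i) h1
    rw [Real.log_prod (fun i _ => (hxp i).ne'), Real.log_prod (fun i _ => (hyp i).ne')] at h2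
    simp only [gg, Finset.sum_sub_distrib, ← Finset.sum_mul, hsum]
    linarith
  have main : ∀ p : ℝ, 1 < p → p < r + 1 → ∑ i, y i ^ p ≤ ∑ i, x i ^ p := by
    intro p hp hp'
    have hC := GG_pos r p hp hp'
    refine le_of_mul_le_mul_right ?_ hC
    rw [Finset.sum_mul, Finset.sum_mul]
    rw [← Finset.sum_congr rfl (fun i _ => (scale r p hp hp' (y i) (hy i)).2),
      ← Finset.sum_congr rfl (fun i _ => (scale r p hp hp' (x i) (hx i)).2)]
    rw [← integral_finset_sum _ (fun i _ => (scale r p hp hp' (y i) (hy i)).1),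
      ← integral_finset_sum _ (fun i _ => (scale r p hp hp' (x i) (hx i)).1)]
    refine setIntegral_mono_on
      (integrable_finset_sum _ (fun i _ => (scale r p hp hp' (y i) (hy i)).1))
      (integrable_finset_sum _ (fun i _ => (scale r p hp hp' (x i) (hx i)).1)) measurableSet_Ioi ?_
    intro t ht
    rw [← Finset.sum_mul, ← Finset.sum_mul]
    exact mul_le_mul_of_nonneg_right (hg t ht) (Real.rpow_nonneg (le_of_lt ht) _)
  have hr' : (1:ℝ) ≤ r := by exact_mod_cast hr
  intro p hp hp'
  rcases hp.eq_or_lt with rfl | hp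
  · simp [hsum]
  rcases hp'.lt_or_eq with hp' | rfl
  · exact main p hp hp'
  · have hcont : ∀ z : Fin n → ℝ, (∀ i, 0 ≤ z i) → Filter.Tendsto (fun p : ℝ => ∑ i, z i ^ p)
        (nhdsWithin ((r:ℝ)+1) (Set.Iio ((r:ℝ)+1))) (nhds (∑ i, z i ^ ((r:ℝ)+1))) := by
      intro z hz
      refine tendsto_finset_sum _ fun i _ => ?_
      exact (Real.continuousAt_const_rpow' (by positivity)).tendsto.mono_left nhdsWithin_le_nhds
    refine le_of_tendsto_of_tendsto (hcont y hy) (hcont x hx) ?_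
    filter_upwards [Ioo_mem_nhdsLT hp] with q hq using main q hq.1 hq.2
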